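/- Let A > 1 and let u be a radial non-increasing weight on 𝔻 satisfying (LOG 1) with constant A. Let f be holomorphic on 𝔻 with u(z)|f(z)| ≤ 1 for all z ∈ 𝔻. Let t ≥ 0 be an integer and z ∈ 𝔻 with r_t ≤ |z| ≤ r_{t+1}. Then for every integer κ > t + 2 one has |f(r_{κ+1}z) − f(r_κ z)| ≤ 4·A^{κ−t}·2^{−2^{κ−1}}/u(z), and for κ = t + 2 one has |f(r_{κ+1}z) − f(r_κ z)| ≤ 4·A²/u(z). -/

import Mathlib

noncomputable section

open Complex

/-- The open unit disc in ℂ. -/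
def uD : Set ℂ := {z : ℂ | ‖z‖ < 1}

/-- Holomorphic on the unit disc. -/
def Holo (f : ℂ → ℂ) : Prop := DifferentiableOn ℂ f uD

/-- A weight on 𝔻: continuous and strictly positive. -/
def IsWeight (v : ℂ → ℝ) : Prop :=
  ContinuousOn v uD ∧ ∀ z ∈ uD, 0 < v z

/-- Radial weight. -/
def Radial (v : ℂ → ℝ) : Prop :=
  ∀ z ∈ uD, ∀ w ∈ uD, ‖z‖ = ‖w‖ → v z = v w

/-- Non-increasing in the modulus. -/
def NonInc (v : ℂ → ℝ) : Prop :=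
  ∀ z ∈ uD, ∀ w ∈ uD, ‖z‖ ≤ ‖w‖ → v w ≤ v z

/-- r₀ = 0, r_κ = 1 - 2^(-2^κ) for κ ≥ 1. -/
def rseq (κ : ℕ) : ℝ := if κ = 0 then 0 else 1 - 1 / 2 ^ (2 ^ κ)

/-- Condition (LOG 1) for a single radial weight. -/
def Log1 (A : ℝ) (v : ℂ → ℝ) : Prop :=
  ∀ κ : ℕ, v (rseq κ : ℂ) ≤ A * v (rseq (κ + 1) : ℂ)

/-- Condition (LOG 2) for a single radial weight. -/
def Log2 (a : ℝ) (v : ℂ → ℝ) : Prop :=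
  ∀ κ : ℕ, v (rseq (κ + 1) : ℂ) ≤ a * v (rseq κ : ℂ)

/-- The weight tends to 0 as |z| → 1. -/
def VanishAtOne (v : ℂ → ℝ) : Prop :=
  ∀ ε > 0, ∃ r : ℝ, r < 1 ∧ ∀ z ∈ uD, r ≤ ‖z‖ → v z ≤ ε

/-- Associated growth function w~ of a growth condition w. -/
def growthTilde (w : ℂ → ℝ) (z : ℂ) : ℝ :=
  sSup {t : ℝ | ∃ g : ℂ → ℂ, Holo g ∧ (∀ x ∈ uD, ‖g x‖ ≤ w x) ∧ t = ‖g z‖}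

/-- Associated weight ṽ = 1/(1/v)~. -/
def assocWeight (v : ℂ → ℝ) (z : ℂ) : ℝ := (growthTilde (fun x => 1 / v x) z)⁻¹

/-- Monotonicity of the double sequence: decreasing in n, increasing in N. -/
def MonoSeq (a : ℕ → ℕ → ℂ → ℝ) : Prop :=
  ∀ N n, ∀ z ∈ uD, a N (n + 1) z ≤ a N n z ∧ a N n z ≤ a (N + 1) n z

/-- Condition (LOG) for a double sequence with constants 0 < a < 1 < A. -/
def SeqLOG (aa A : ℝ) (a : ℕ → ℕ → ℂ → ℝ) : Prop :=
  ∀ N n, Radial (a N n) ∧ NonInc (a N n) ∧ VanishAtOne (a N n) ∧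
    Log1 A (a N n) ∧ Log2 aa (a N n)

/-- Condition (Q). -/
def CondQ (a : ℕ → ℕ → ℂ → ℝ) : Prop :=
  ∀ N, ∃ M ≥ N, ∃ n, ∀ K ≥ M, ∀ m, ∀ ε > 0, ∃ k, ∃ S > 0,
    ∀ z ∈ uD, 1 / a M m z ≤ max (ε / a N n z) (S / a K k z)

/-- Condition (wQ). -/
def CondwQ (a : ℕ → ℕ → ℂ → ℝ) : Prop :=
  ∀ N, ∃ M ≥ N, ∃ n, ∀ K ≥ M, ∀ m, ∃ k, ∃ S > 0,
    ∀ z ∈ uD, 1 / a M m z ≤ max (S / a N n z) (S / a K k z)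

/-- Condition (Q)~. -/
def CondQTilde (a : ℕ → ℕ → ℂ → ℝ) : Prop :=
  ∀ N, ∃ M ≥ N, ∃ n, ∀ K ≥ M, ∀ m, ∀ ε > 0, ∃ k, ∃ S > 0,
    ∀ z ∈ uD, growthTilde (fun x => 1 / a M m x) z ≤
      growthTilde (fun x => max (ε / a N n x) (S / a K k x)) z

/-- Pointwise maximum max_{N=1,…,L} a_{N,n(N)}. -/
def finMax (a : ℕ → ℕ → ℂ → ℝ) (nn : ℕ → ℕ) (L : ℕ) (z : ℂ) : ℝ :=
  sSup {t : ℝ | ∃ N, 1 ≤ N ∧ N ≤ L ∧ t = a N (nn N) z}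

/-- Condition (B). -/
def CondB (a : ℕ → ℕ → ℂ → ℝ) : Prop :=
  ∀ nn : ℕ → ℕ, ∃ m, ∀ M, ∃ L, 1 ≤ L ∧ ∃ c > 0,
    ∀ z ∈ uD, a M m z ≤ c * finMax a nn L z

/-- Condition (B)~. -/
def CondBTilde (a : ℕ → ℕ → ℂ → ℝ) : Prop :=
  ∀ nn : ℕ → ℕ, ∃ m, ∀ M, ∃ L, 1 ≤ L ∧ ∃ c > 0,
    ∀ z ∈ uD, assocWeight (a M m) z ≤ c * assocWeight (finMax a nn L) z

/-- A weight is essential. -/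
def Essential (v : ℂ → ℝ) : Prop :=
  ∃ C > 0, ∀ z ∈ uD,
    growthTilde (fun x => 1 / v x) z ≤ 1 / v z ∧
    1 / v z ≤ C * growthTilde (fun x => 1 / v x) z

/-- Condition (Σ). -/
def CondSigma (a : ℕ → ℕ → ℂ → ℝ) : Prop :=
  ∀ N, ∃ K ≥ N, ∀ k, ∃ n ≥ k, ∀ ε > 0, ∃ Q : Set ℂ,
    IsCompact Q ∧ Q ⊆ uD ∧ ∀ z ∈ uD \ Q, a N n z / a K k z ≤ ε

/-- The Banach space Ha(𝔻) as a set of functions. -/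
def HaSet (v : ℂ → ℝ) : Set (ℂ → ℂ) :=
  {f | Holo f ∧ ∃ C : ℝ, ∀ z ∈ uD, v z * ‖f z‖ ≤ C}

/- The estimate is a Lipschitz bound. On `‖w‖ ≤ r_{t+2}` the weight is at least `u z / A²`, by two
applications of (LOG 1), so `‖f w‖ ≤ A² / u z` there. Since `r_{t+2} - r_{t+1}` is comparable to
`1 - r_{t+1} = 2^(-2^(t+1))`, Cauchy's estimate makes `f` Lipschitz on `‖w‖ ≤ r_{t+1}` with constant
`2 A² 2^(2^(t+1)) / u z`. The points `r_{κ+1} z` and `r_κ z` lie in that disc, at distance at most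
`1 - r_κ = 2^(-2^κ)`. For `κ ≥ t + 2` the factor `2^(2^(t+1))` is at most `2^(2^(κ-1))`, the square
root of `2^(2^κ)`, so it uses up at most half of the exponent. -/

section Lipschitz

open Metric

variable {E : Type*} [NormedAddCommGroup E] [NormedSpace ℂ E]

lemma norm_image_sub_le_of_diffContOnCl_ball {f : ℂ → E} {c x y : ℂ} {r R M : ℝ} (hrR : r < R)
    (hf : DiffContOnCl ℂ f (ball c R)) (hM : ∀ w ∈ closedBall c R, ‖f w‖ ≤ M)
    (hx : x ∈ closedBall c r) (hy : y ∈ closedBall c r) :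
    ‖f y - f x‖ ≤ M / (R - r) * ‖y - x‖ := by
  refine (convex_closedBall c r).norm_image_sub_le_of_norm_deriv_le (𝕜 := ℂ)
    (fun w hw => hf.differentiableAt isOpen_ball (closedBall_subset_ball hrR hw))
    (fun w hw => ?_) hx hy
  have hdist : R - r + dist w c ≤ R := by linarith [mem_closedBall.1 hw]
  exact norm_deriv_le_of_forall_mem_sphere_norm_le (sub_pos.2 hrR)
    (hf.mono (ball_subset_ball' hdist))
    fun v hv => hM v (closedBall_subset_closedBall' hdist (sphere_subset_closedBall hv))

end Lipschitz

section Radii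

lemma rseq_succ (k : ℕ) : rseq (k + 1) = 1 - 1 / 2 ^ 2 ^ (k + 1) := by
  simp [rseq]

lemma rseq_nonneg (k : ℕ) : 0 ≤ rseq k := by
  unfold rseq
  split_ifs
  · exact le_rfl
  · exact sub_nonneg.2 (div_le_one_of_le₀ (one_le_pow₀ one_le_two) (by positivity))

lemma rseq_lt_one (k : ℕ) : rseq k < 1 := by
  unfold rseq
  split_ifs
  · exact one_pos
  · exact sub_lt_self _ (by positivity)

lemma norm_rseq (k : ℕ) : ‖(rseq k : ℂ)‖ = rseq k :=
  Complex.norm_of_nonneg (rseq_nonneg k)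

lemma mem_uD_of_norm_le_rseq {k : ℕ} {w : ℂ} (hw : ‖w‖ ≤ rseq k) : w ∈ uD :=
  hw.trans_lt (rseq_lt_one k)

lemma rseq_mem_uD (k : ℕ) : (rseq k : ℂ) ∈ uD :=
  mem_uD_of_norm_le_rseq (norm_rseq k).le

lemma norm_rseq_mul_le (k : ℕ) (z : ℂ) : ‖(rseq k : ℂ) * z‖ ≤ ‖z‖ := by
  rw [norm_mul, norm_rseq]
  exact mul_le_of_le_one_left (norm_nonneg z) (rseq_lt_one k).le

lemma rseq_succ_sub_rseq {k : ℕ} (hk : 1 ≤ k) :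
    rseq (k + 1) - rseq k = 1 / 2 ^ 2 ^ k * (1 - 1 / 2 ^ 2 ^ k) := by
  obtain ⟨k, rfl⟩ := Nat.exists_eq_add_of_le' hk
  rw [rseq_succ, rseq_succ, pow_succ 2 (k + 1), pow_mul]
  ring

lemma rseq_succ_sub_rseq_mem_Icc {k : ℕ} (hk : 1 ≤ k) :
    rseq (k + 1) - rseq k ∈ Set.Icc (1 / 2 ^ 2 ^ k / 2) (1 / 2 ^ 2 ^ k) := by
  have hpos : (0 : ℝ) < 1 / 2 ^ 2 ^ k := by positivity
  have hhalf : (1 : ℝ) / 2 ^ 2 ^ k ≤ 1 / 2 :=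
    one_div_le_one_div_of_le two_pos (le_self_pow₀ one_le_two (by positivity))
  rw [rseq_succ_sub_rseq hk]
  constructor <;> nlinarith

lemma norm_rseq_succ_mul_sub_rseq_mul_le {k : ℕ} (hk : 1 ≤ k) {z : ℂ} (hz : ‖z‖ ≤ 1) :
    ‖(rseq (k + 1) : ℂ) * z - (rseq k : ℂ) * z‖ ≤ 1 / 2 ^ 2 ^ k := by
  obtain ⟨hlower, hupper⟩ := rseq_succ_sub_rseq_mem_Icc hk
  rw [← sub_mul, norm_mul, ← ofReal_sub, Complex.norm_of_nonneg (le_trans (by positivity) hlower)]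
  exact (mul_le_of_le_one_right (le_trans (by positivity) hlower) hz).trans hupper

lemma two_pow_two_pow_div_le {m k : ℕ} (hmk : m < k) :
    (2 : ℝ) ^ 2 ^ m / 2 ^ 2 ^ k ≤ 1 / 2 ^ 2 ^ (k - 1) := by
  obtain ⟨j, rfl⟩ := Nat.exists_eq_add_of_le' (Nat.one_le_of_lt hmk)
  calc (2 : ℝ) ^ 2 ^ m / 2 ^ 2 ^ (j + 1) ≤ 2 ^ 2 ^ j / 2 ^ 2 ^ (j + 1) := by
        gcongr
        · exact one_le_two
        · exact one_le_two
        · exact Nat.le_of_lt_succ hmk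
    _ = 1 / 2 ^ 2 ^ (j + 1 - 1) := by
        rw [Nat.add_sub_cancel, pow_succ 2 j, pow_mul]
        field_simp

end Radii

section Weights

variable {A : ℝ} {u : ℂ → ℝ}

lemma Log1.one_le (hl : Log1 A u) (hni : NonInc u) (hpos : ∀ z ∈ uD, 0 < u z) : 1 ≤ A := by
  have hle : u (rseq 1 : ℂ) ≤ u (rseq 0 : ℂ) :=
    hni _ (rseq_mem_uD 0) _ (rseq_mem_uD 1) (by simp [rseq])
  refine le_of_mul_le_mul_right ?_ (hpos _ (rseq_mem_uD 1))
  simpa only [one_mul] using hle.trans (hl 0)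

lemma Log1.le_pow_mul (hl : Log1 A u) (hA : 0 ≤ A) (t n : ℕ) :
    u (rseq t : ℂ) ≤ A ^ n * u (rseq (t + n) : ℂ) := by
  induction n with
  | zero => simp
  | succ n ih =>
    calc u (rseq t : ℂ) ≤ A ^ n * u (rseq (t + n) : ℂ) := ih
      _ ≤ A ^ n * (A * u (rseq (t + n + 1) : ℂ)) := by gcongr; exact hl (t + n)
      _ = A ^ (n + 1) * u (rseq (t + (n + 1)) : ℂ) := by rw [pow_succ, mul_assoc, add_assoc]

lemma Log1.le_pow_mul_of_norm_le (hl : Log1 A u) (hni : NonInc u) (hA : 0 ≤ A) {t n : ℕ}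
    {z w : ℂ} (hz : z ∈ uD) (htz : rseq t ≤ ‖z‖) (hw : ‖w‖ ≤ rseq (t + n)) :
    u z ≤ A ^ n * u w :=
  calc u z ≤ u (rseq t : ℂ) := hni _ (rseq_mem_uD t) z hz (by rwa [norm_rseq])
    _ ≤ A ^ n * u (rseq (t + n) : ℂ) := hl.le_pow_mul hA t n
    _ ≤ A ^ n * u w := by
      gcongr
      exact hni w (mem_uD_of_norm_le_rseq hw) _ (rseq_mem_uD _) (by rwa [norm_rseq])

lemma norm_le_pow_div_of_norm_le_rseq {E : Type*} [NormedAddCommGroup E] {f : ℂ → E} (hl : Log1 A u)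
    (hni : NonInc u) (hA : 0 ≤ A) (hbd : ∀ z ∈ uD, u z * ‖f z‖ ≤ 1) {t n : ℕ} {z w : ℂ}
    (hz : z ∈ uD) (huz : 0 < u z) (htz : rseq t ≤ ‖z‖) (hw : ‖w‖ ≤ rseq (t + n)) :
    ‖f w‖ ≤ A ^ n / u z := by
  rw [le_div_iff₀' huz]
  calc u z * ‖f w‖ ≤ A ^ n * u w * ‖f w‖ := by
        gcongr; exact hl.le_pow_mul_of_norm_le hni hA hz htz hw
    _ = A ^ n * (u w * ‖f w‖) := mul_assoc _ _ _
    _ ≤ A ^ n := mul_le_of_le_one_right (by positivity) (hbd w (mem_uD_of_norm_le_rseq hw))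

end Weights

section Difference

variable {E : Type*} [NormedAddCommGroup E] [NormedSpace ℂ E] {A : ℝ} {u : ℂ → ℝ} {f : ℂ → E}
  {t : ℕ} {z : ℂ}

theorem norm_image_sub_le_of_norm_le_rseq (hpos : ∀ z ∈ uD, 0 < u z) (hni : NonInc u)
    (hl : Log1 A u) (hf : DifferentiableOn ℂ f uD) (hbd : ∀ z ∈ uD, u z * ‖f z‖ ≤ 1)
    (hz : z ∈ uD) (htz : rseq t ≤ ‖z‖) {x y : ℂ} (hx : ‖x‖ ≤ rseq (t + 1))
    (hy : ‖y‖ ≤ rseq (t + 1)) :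
    ‖f y - f x‖ ≤ 2 * A ^ 2 * 2 ^ 2 ^ (t + 1) / u z * ‖y - x‖ := by
  have huz : 0 < u z := hpos z hz
  have hA : 0 ≤ A := zero_le_one.trans (hl.one_le hni hpos)
  have hgap : 1 / 2 ^ 2 ^ (t + 1) / 2 ≤ rseq (t + 2) - rseq (t + 1) :=
    (rseq_succ_sub_rseq_mem_Icc (Nat.le_add_left 1 t)).1
  have hgap_pos : 0 < rseq (t + 2) - rseq (t + 1) := lt_of_lt_of_le (by positivity) hgap
  have hfcl : DiffContOnCl ℂ f (Metric.ball 0 (rseq (t + 2))) :=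
    hf.diffContOnCl_ball fun w hw => mem_uD_of_norm_le_rseq (mem_closedBall_zero_iff.1 hw)
  have hbound : ∀ w ∈ Metric.closedBall (0 : ℂ) (rseq (t + 2)), ‖f w‖ ≤ A ^ 2 / u z := fun w hw =>
    norm_le_pow_div_of_norm_le_rseq hl hni hA hbd hz huz htz (mem_closedBall_zero_iff.1 hw)
  calc ‖f y - f x‖ ≤ A ^ 2 / u z / (rseq (t + 2) - rseq (t + 1)) * ‖y - x‖ :=
        norm_image_sub_le_of_diffContOnCl_ball (sub_pos.1 hgap_pos) hfcl hbound
          (mem_closedBall_zero_iff.2 hx) (mem_closedBall_zero_iff.2 hy)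
    _ ≤ A ^ 2 / u z / (1 / 2 ^ 2 ^ (t + 1) / 2) * ‖y - x‖ := by gcongr
    _ = 2 * A ^ 2 * 2 ^ 2 ^ (t + 1) / u z * ‖y - x‖ := by field_simp

theorem norm_image_rseq_succ_mul_sub_le (hpos : ∀ z ∈ uD, 0 < u z) (hni : NonInc u)
    (hl : Log1 A u) (hf : DifferentiableOn ℂ f uD) (hbd : ∀ z ∈ uD, u z * ‖f z‖ ≤ 1)
    (htz : rseq t ≤ ‖z‖) (hzt : ‖z‖ ≤ rseq (t + 1)) {k : ℕ} (hk : 1 ≤ k) :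
    ‖f ((rseq (k + 1) : ℂ) * z) - f ((rseq k : ℂ) * z)‖ ≤
      2 * A ^ 2 * (2 ^ 2 ^ (t + 1) / 2 ^ 2 ^ k) / u z := by
  have hz : z ∈ uD := mem_uD_of_norm_le_rseq hzt
  have huz : 0 < u z := hpos z hz
  calc ‖f ((rseq (k + 1) : ℂ) * z) - f ((rseq k : ℂ) * z)‖
      ≤ 2 * A ^ 2 * 2 ^ 2 ^ (t + 1) / u z * ‖(rseq (k + 1) : ℂ) * z - (rseq k : ℂ) * z‖ :=
        norm_image_sub_le_of_norm_le_rseq hpos hni hl hf hbd hz htz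
          ((norm_rseq_mul_le k z).trans hzt) ((norm_rseq_mul_le (k + 1) z).trans hzt)
    _ ≤ 2 * A ^ 2 * 2 ^ 2 ^ (t + 1) / u z * (1 / 2 ^ 2 ^ k) := by
        gcongr
        exact norm_rseq_succ_mul_sub_rseq_mul_le hk (le_of_lt hz)
    _ = 2 * A ^ 2 * (2 ^ 2 ^ (t + 1) / 2 ^ 2 ^ k) / u z := by ring

theorem difference_estimate_inner_general (hpos : ∀ z ∈ uD, 0 < u z) (hni : NonInc u)
    (hl : Log1 A u) (hf : DifferentiableOn ℂ f uD) (hbd : ∀ z ∈ uD, u z * ‖f z‖ ≤ 1)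
    (htz : rseq t ≤ ‖z‖) (hzt : ‖z‖ ≤ rseq (t + 1)) :
    (∀ κ : ℕ, t + 2 < κ →
      ‖f ((rseq (κ + 1) : ℂ) * z) - f ((rseq κ : ℂ) * z)‖ ≤
        4 * A ^ (κ - t) / 2 ^ 2 ^ (κ - 1) / u z) ∧
    ‖f ((rseq (t + 3) : ℂ) * z) - f ((rseq (t + 2) : ℂ) * z)‖ ≤
      4 * A ^ 2 / u z := by
  have huz : 0 < u z := hpos z (mem_uD_of_norm_le_rseq hzt)
  have hA : 1 ≤ A := hl.one_le hni hpos
  have hdiff : ∀ κ, t + 2 ≤ κ → ‖f ((rseq (κ + 1) : ℂ) * z) - f ((rseq κ : ℂ) * z)‖ ≤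
      4 * A ^ 2 / 2 ^ 2 ^ (κ - 1) / u z := fun κ hκ =>
    calc ‖f ((rseq (κ + 1) : ℂ) * z) - f ((rseq κ : ℂ) * z)‖
        ≤ 2 * A ^ 2 * (2 ^ 2 ^ (t + 1) / 2 ^ 2 ^ κ) / u z :=
          norm_image_rseq_succ_mul_sub_le hpos hni hl hf hbd htz hzt (by omega)
      _ ≤ 4 * A ^ 2 * (1 / 2 ^ 2 ^ (κ - 1)) / u z := by
          gcongr ?_ * _ * ?_ / _
          · norm_num
          · exact two_pow_two_pow_div_le hκ
      _ = 4 * A ^ 2 / 2 ^ 2 ^ (κ - 1) / u z := by rw [mul_one_div]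
  refine ⟨fun κ hκ => (hdiff κ hκ.le).trans ?_, (hdiff (t + 2) le_rfl).trans ?_⟩
  · have hexp : 2 ≤ κ - t := by omega
    gcongr
  · gcongr
    exact div_le_self (by positivity) (one_le_pow₀ one_le_two)

end Difference

/-- for r_t ≤ |z| ≤ r_{t+1}: |f(r_{κ+1}z) − f(r_κ z)| ≤ 4·A^{κ−t}·2^{−2^{κ−1}}/u(z)
for κ > t + 2, and ≤ 4A²/u(z) for κ = t + 2. -/
theorem difference_estimate_inner (A : ℝ) (hA : 1 < A) (u : ℂ → ℝ)
    (hw : IsWeight u) (hrad : Radial u) (hni : NonInc u) (hl : Log1 A u)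
    (f : ℂ → ℂ) (hf : Holo f) (hbd : ∀ z ∈ uD, u z * ‖f z‖ ≤ 1)
    (t : ℕ) (z : ℂ) (hz : z ∈ uD)
    (hz1 : rseq t ≤ ‖z‖) (hz2 : ‖z‖ ≤ rseq (t + 1)) :
    (∀ κ : ℕ, t + 2 < κ →
      ‖f ((rseq (κ + 1) : ℂ) * z) - f ((rseq κ : ℂ) * z)‖ ≤
        4 * A ^ (κ - t) / 2 ^ 2 ^ (κ - 1) / u z) ∧
    ‖f ((rseq (t + 3) : ℂ) * z) - f ((rseq (t + 2) : ℂ) * z)‖ ≤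
      4 * A ^ 2 / u z :=
  difference_estimate_inner_general hw.2 hni hl hf hbd hz1 hz2
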